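/- Let H be a complex Hilbert space and let A, B, C assign to each interval I of ℝ subsets A(I), B(I), C(I) of B(H). Assume: (isotony of C) C(I) ⊆ C(I') whenever I ⊆ I'; (extension) A(I) ⊆ C(I) and B(I) ⊆ C(I) for all I; (forward locality of C w.r.t. A) A(J) commutes elementwise with C(K) whenever K > J; (backward locality of C w.r.t. B) B(I) commutes elementwise with C(K) whenever K < I. For a half-space double cone (I, J) with sup J < inf I define the induced algebra C₊(I,J) := C((sup J, inf I))′ ∩ C((inf J, sup I))″. Then: (i) B(I) ∪ A(J) ⊆ C₊(I,J); (ii) if (I', J') is another half-space double cone with sup J' < inf I', I > I' and J' > J (spacelike separation), then C₊(I,J) and C₊(I',J') commute elementwise. (Locality of the induced net on the half-space.) -/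

import Mathlib

/-!
The part of the half-space double cone `(I, J)` that matters for locality is the gap
`(sup J, inf I)`: a spacelike separated double cone `(I', J')` lies entirely inside it, i.e.
`(inf J', sup I') ⊆ (sup J, inf I)`. An element of `C₊(I, J)` commutes with `C` of the gap, hence by
isotony with `C((inf J', sup I'))`, hence with its bicommutant, which contains `C₊(I', J')`.
-/

section Centralizer

variable {M : Type*} [Mul M] {S T X S₁ T₁ S₂ T₂ : Set M}

/-- Elementwise commutation of two subsets of a magma. -/
def CommuteElementwise (S T : Set M) : Prop :=
  ∀ x ∈ S, ∀ y ∈ T, Commute x y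

theorem CommuteElementwise.subset_centralizer (h : CommuteElementwise S T) :
    S ⊆ T.centralizer :=
  fun x hx y hy => (h x hx y hy).symm

/-- The relative commutant `S′ ∩ T″` of `S` in the bicommutant of `T`. -/
def relativeCommutant (S T : Set M) : Set M :=
  S.centralizer ∩ T.centralizer.centralizer

theorem subset_relativeCommutant (hXS : CommuteElementwise X S) (hXT : X ⊆ T) :
    X ⊆ relativeCommutant S T :=
  Set.subset_inter hXS.subset_centralizer (hXT.trans Set.subset_centralizer_centralizer)

theorem commuteElementwise_relativeCommutant (hTS : T₂ ⊆ S₁) :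
    CommuteElementwise (relativeCommutant S₁ T₁) (relativeCommutant S₂ T₂) := by
  rintro x ⟨hxS₁, -⟩ y ⟨-, hyT₂⟩
  exact hyT₂ x (Set.centralizer_subset hTS hxS₁)

end Centralizer

section HalfSpace

variable {ι : Type*} [Preorder ι]

/-- A bounded open interval `(inf, sup)` with `inf < sup`, encoded by its endpoints so that the
notion makes sense over any preorder. -/
structure OpenInterval (ι : Type*) [Preorder ι] where
  inf : ι
  sup : ι
  inf_lt_sup : inf < sup

namespace OpenInterval

/-- Inclusion of intervals, expressed through the endpoints. -/
instance : Preorder (OpenInterval ι) where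
  le I K := K.inf ≤ I.inf ∧ I.sup ≤ K.sup
  le_refl _ := ⟨le_rfl, le_rfl⟩
  le_trans _ _ _ hIK hKL := ⟨hKL.1.trans hIK.1, hIK.2.trans hKL.2⟩

/-- The relation `J < I` of the paper: `J` lies entirely before `I`. It must not be confused with
`<` on `OpenInterval`, which is strict inclusion. -/
def Precedes (J I : OpenInterval ι) : Prop :=
  J.sup ≤ I.inf

end OpenInterval

/-- A half-space double cone `(I, J)` with a nondegenerate gap, `sup J < inf I`; the field `right`
is `I` and the field `left` is `J`. -/
structure DoubleCone (ι : Type*) [Preorder ι] where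
  right : OpenInterval ι
  left : OpenInterval ι
  sup_lt_inf : left.sup < right.inf

namespace DoubleCone

/-- The interval `(sup J, inf I)` between the two sides of a double cone. -/
def gap (O : DoubleCone ι) : OpenInterval ι :=
  ⟨O.left.sup, O.right.inf, O.sup_lt_inf⟩

/-- The interval `(inf J, sup I)` spanned by the two sides of a double cone. -/
def hull (O : DoubleCone ι) : OpenInterval ι :=
  ⟨O.left.inf, O.right.sup, O.left.inf_lt_sup.trans (O.sup_lt_inf.trans O.right.inf_lt_sup)⟩

/-- Spacelike separation `I' < I`, `J < J'` of the double cones `O = (I, J)` and `O' = (I', J')`,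
with `O'` the one closer to the boundary. -/
def Spacelike (O O' : DoubleCone ι) : Prop :=
  O'.right.Precedes O.right ∧ O.left.Precedes O'.left

theorem left_precedes_gap (O : DoubleCone ι) : O.left.Precedes O.gap :=
  le_refl O.left.sup

theorem gap_precedes_right (O : DoubleCone ι) : O.gap.Precedes O.right :=
  le_refl O.right.inf

theorem right_le_hull (O : DoubleCone ι) : O.right ≤ O.hull :=
  ⟨(O.left.inf_lt_sup.trans O.sup_lt_inf).le, le_rfl⟩

theorem left_le_hull (O : DoubleCone ι) : O.left ≤ O.hull :=
  ⟨le_rfl, (O.sup_lt_inf.trans O.right.inf_lt_sup).le⟩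

theorem Spacelike.hull_le_gap {O O' : DoubleCone ι} (h : O.Spacelike O') : O'.hull ≤ O.gap :=
  ⟨h.2, h.1⟩

end DoubleCone

section Net

variable {M : Type*} [Mul M] {A B C : OpenInterval ι → Set M}

/-- Forward locality of `C` with respect to `A`: `A(J)` commutes with `C(K)` whenever `K > J`. -/
def ForwardLocal (A C : OpenInterval ι → Set M) : Prop :=
  ∀ ⦃J K⦄, J.Precedes K → CommuteElementwise (A J) (C K)

/-- Backward locality of `C` with respect to `B`: `B(I)` commutes with `C(K)` whenever `K < I`. -/
def BackwardLocal (B C : OpenInterval ι → Set M) : Prop :=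
  ∀ ⦃I K⦄, K.Precedes I → CommuteElementwise (B I) (C K)

/-- The induced net `C₊(I, J) = C((sup J, inf I))′ ∩ C((inf J, sup I))″` on the half-space. -/
def inducedNet (C : OpenInterval ι → Set M) (O : DoubleCone ι) : Set M :=
  relativeCommutant (C O.gap) (C O.hull)

theorem ForwardLocal.subset_inducedNet (hA : ForwardLocal A C) (hAC : A ≤ C) (hC : Monotone C)
    (O : DoubleCone ι) : A O.left ⊆ inducedNet C O :=
  subset_relativeCommutant (hA O.left_precedes_gap) ((hAC O.left).trans (hC O.left_le_hull))

theorem BackwardLocal.subset_inducedNet (hB : BackwardLocal B C) (hBC : B ≤ C) (hC : Monotone C)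
    (O : DoubleCone ι) : B O.right ⊆ inducedNet C O :=
  subset_relativeCommutant (hB O.gap_precedes_right) ((hBC O.right).trans (hC O.right_le_hull))

theorem DoubleCone.Spacelike.commuteElementwise_inducedNet {O O' : DoubleCone ι}
    (h : O.Spacelike O') (hC : Monotone C) :
    CommuteElementwise (inducedNet C O) (inducedNet C O') :=
  commuteElementwise_relativeCommutant (hC h.hull_le_gap)

theorem stmt_7_general (hC : Monotone C) (hAC : A ≤ C) (hBC : B ≤ C)
    (hA : ForwardLocal A C) (hB : BackwardLocal B C) :
    (∀ O : DoubleCone ι, B O.right ∪ A O.left ⊆ inducedNet C O) ∧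
      ∀ O O' : DoubleCone ι, O.Spacelike O' →
        CommuteElementwise (inducedNet C O) (inducedNet C O') :=
  ⟨fun O => Set.union_subset (hB.subset_inducedNet hBC hC O) (hA.subset_inducedNet hAC hC O),
    fun _ _ h => h.commuteElementwise_inducedNet hC⟩

end Net

end HalfSpace

/-- Locality of the induced net on the half-space: with `C` an isotonous net on
intervals of `ℝ` extending `A` and `B`, forwardly local w.r.t. `A` and backwardly
local w.r.t. `B`, and
`C₊(I,J) := C((sup J, inf I))′ ∩ C((inf J, sup I))″` for a half-space double cone
`(I,J)` with `sup J < inf I`, one has (i) `B(I) ∪ A(J) ⊆ C₊(I,J)` and (ii) for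
spacelike separated double cones the induced algebras commute elementwise.
Intervals `(a,b)` of `ℝ` are encoded by endpoints `a < b`. -/
theorem stmt_7 {H : Type*} [NormedAddCommGroup H] [InnerProductSpace ℂ H]
    (A B C : ℝ → ℝ → Set (H →L[ℂ] H))
    -- isotony of C
    (hisoC : ∀ a b a' b' : ℝ, a < b → a' < b' → a' ≤ a → b ≤ b' → C a b ⊆ C a' b')
    -- C extends A and B
    (hAC : ∀ a b : ℝ, a < b → A a b ⊆ C a b)
    (hBC : ∀ a b : ℝ, a < b → B a b ⊆ C a b)
    -- forward locality of C w.r.t. A : A(J) commutes with C(K) whenever K > J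
    (hfwd : ∀ a b k1 k2 : ℝ, a < b → k1 < k2 → b ≤ k1 →
      ∀ x ∈ A a b, ∀ y ∈ C k1 k2, x * y = y * x)
    -- backward locality of C w.r.t. B : B(I) commutes with C(K) whenever K < I
    (hbwd : ∀ a b k1 k2 : ℝ, a < b → k1 < k2 → k2 ≤ a →
      ∀ x ∈ B a b, ∀ y ∈ C k1 k2, x * y = y * x) :
    -- (i)
    (∀ i1 i2 j1 j2 : ℝ, i1 < i2 → j1 < j2 → j2 < i1 →
      B i1 i2 ∪ A j1 j2 ⊆
        Set.centralizer (C j2 i1) ∩ Set.centralizer (Set.centralizer (C j1 i2))) ∧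
    -- (ii)
    (∀ i1 i2 j1 j2 i1' i2' j1' j2' : ℝ,
      i1 < i2 → j1 < j2 → j2 < i1 → i1' < i2' → j1' < j2' → j2' < i1' →
      i2' ≤ i1 → j2 ≤ j1' →
      ∀ x ∈ Set.centralizer (C j2 i1) ∩ Set.centralizer (Set.centralizer (C j1 i2)),
      ∀ y ∈ Set.centralizer (C j2' i1') ∩ Set.centralizer (Set.centralizer (C j1' i2')),
        x * y = y * x) := by
  let net (X : ℝ → ℝ → Set (H →L[ℂ] H)) (K : OpenInterval ℝ) := X K.inf K.sup
  obtain ⟨subset_induced, commute_induced⟩ :=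
    stmt_7_general (A := net A) (B := net B) (C := net C)
      (fun K K' hKK' => hisoC _ _ _ _ K.inf_lt_sup K'.inf_lt_sup hKK'.1 hKK'.2)
      (fun K => hAC _ _ K.inf_lt_sup)
      (fun K => hBC _ _ K.inf_lt_sup)
      (fun J K => hfwd _ _ _ _ J.inf_lt_sup K.inf_lt_sup)
      (fun I K => hbwd _ _ _ _ I.inf_lt_sup K.inf_lt_sup)
  exact
    ⟨fun i1 i2 j1 j2 hI hJ hJI => subset_induced ⟨⟨i1, i2, hI⟩, ⟨j1, j2, hJ⟩, hJI⟩,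
     fun i1 i2 j1 j2 i1' i2' j1' j2' hI hJ hJI hI' hJ' hJI' hII hJJ =>
      commute_induced ⟨⟨i1, i2, hI⟩, ⟨j1, j2, hJ⟩, hJI⟩ ⟨⟨i1', i2', hI'⟩, ⟨j1', j2', hJ'⟩, hJI'⟩
        ⟨hII, hJJ⟩⟩
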